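/- arXiv:cond-mat/9910301 — 10 statements merged into one kernel-verified Lean document; each statement's English description precedes it below -/
import Mathlib

section
/- For every real B and every complex-valued Schwartz function f on ℝ, the identity ‖−f'' + B²x²f‖² = ‖f''‖² + B⁴‖x²f‖² + 2B²‖x f'‖² − 2B²‖f‖² holds, where x²f denotes the function x ↦ x²f(x), x f' denotes x ↦ x·f'(x), and f'' is the second derivative of f. -/
open MeasureTheory

lemma aux_norm (u : SchwartzMap ℝ ℂ) :
    (eLpNorm (fun x => u x) 2 volume).toReal ^ 2 = ∫ x, inner ℝ (u x) (u x) := by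
  have h := (u.memLp 2 volume).eLpNorm_eq_integral_rpow_norm (by norm_num) (by norm_num)
  have h0 : 0 ≤ ∫ x, ‖u x‖ ^ 2 := integral_nonneg fun x => by positivity
  change (eLpNorm u 2 volume).toReal ^ 2 = _
  rw [h]
  simp only [ENNReal.toReal_ofNat, Real.rpow_ofNat, real_inner_self_eq_norm_sq]
  rw [ENNReal.toReal_ofReal (by positivity), ← Real.rpow_natCast, ← Real.rpow_mul h0]
  norm_num

lemma aux_int (u v : SchwartzMap ℝ ℂ) : Integrable (fun x => inner ℝ (u x) (v x)) volume := 
  (SchwartzMap.pairing (innerSL ℝ) u v).integrable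

lemma aux_ibp (u v : SchwartzMap ℝ ℂ) :
    ∫ x, inner ℝ (u x) (deriv v x) = -∫ x, inner ℝ (deriv u x) (v x) :=
  SchwartzMap.integral_bilinear_deriv_right_eq_neg_left u v (innerSL ℝ)

lemma aux_mul (u : SchwartzMap ℝ ℂ) : ∃ v : SchwartzMap ℝ ℂ, ∀ x, v x = (x : ℂ) * u x := by
  refine ⟨SchwartzMap.smulLeftCLM ℂ (fun x : ℝ => x) u, fun x => ?_⟩
  rw [SchwartzMap.smulLeftCLM_apply_apply (by fun_prop)]
  simp

lemma aux_deriv (u : SchwartzMap ℝ ℂ) : ∃ v : SchwartzMap ℝ ℂ, ∀ x, v x = deriv u x :=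
  ⟨SchwartzMap.derivCLM ℝ ℂ u, fun _ => rfl⟩

/-- For every real B and every complex-valued Schwartz function f on ℝ,
‖−f'' + B²x²f‖² = ‖f''‖² + B⁴‖x²f‖² + 2B²‖x f'‖² − 2B²‖f‖². -/
theorem stmt_1 (B : ℝ) (f : SchwartzMap ℝ ℂ) :
    (eLpNorm (fun x : ℝ =>
        -(deriv (deriv f) x) + ((B ^ 2 * x ^ 2 : ℝ) : ℂ) * f x) 2 volume).toReal ^ 2 =
      (eLpNorm (fun x : ℝ => deriv (deriv f) x) 2 volume).toReal ^ 2 +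
        B ^ 4 * (eLpNorm (fun x : ℝ => ((x ^ 2 : ℝ) : ℂ) * f x) 2 volume).toReal ^ 2 +
        2 * B ^ 2 * (eLpNorm (fun x : ℝ => (x : ℂ) * deriv f x) 2 volume).toReal ^ 2 -
        2 * B ^ 2 * (eLpNorm (fun x : ℝ => f x) 2 volume).toReal ^ 2 := by
  obtain ⟨f1, h1⟩ := aux_deriv f
  obtain ⟨f2, h2⟩ := aux_deriv f1
  obtain ⟨g, hg⟩ := aux_mul f
  obtain ⟨k, hk⟩ := aux_mul g
  obtain ⟨g1, hg1⟩ := aux_mul f1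
  have e1 : deriv f = f1 := funext fun x => (h1 x).symm
  have e2 : deriv f1 = f2 := funext fun x => (h2 x).symm
  have dg : ∀ x, deriv g x = f x + g1 x := by
    intro x
    have : (g : ℝ → ℂ) = fun x : ℝ => (x : ℂ) * f x := funext hg
    rw [this, hg1, h1]
    have := (Complex.ofRealCLM.hasDerivAt (x := x)).fun_mul (f.hasDerivAt x)
    simpa using this.deriv
  have dk : ∀ x, deriv k x = g x + (x : ℂ) * deriv g x := by
    intro x
    have : (k : ℝ → ℂ) = fun x : ℝ => (x : ℂ) * g x := funext hk
    rw [this]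
    have := (Complex.ofRealCLM.hasDerivAt (x := x)).fun_mul (g.hasDerivAt x)
    simpa using this.deriv
  have E1 : (fun x : ℝ => -(f2 x) + ((B ^ 2 * x ^ 2 : ℝ) : ℂ) * f x)
      = fun x => (-f2 + (B ^ 2) • k) x := by
    funext x
    simp [hk, hg]; ring
  have E2 : (fun x : ℝ => ((x ^ 2 : ℝ) : ℂ) * f x) = fun x => k x := by
    funext x
    simp [hk, hg]; ring
  have E3 : (fun x : ℝ => (x : ℂ) * f1 x) = fun x => g1 x := by
    funext x; rw [hg1]
  rw [e1, e2, E1, E2, E3]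
  simp only [aux_norm]
  have I1 : ∫ x, inner ℝ ((-f2 + (B ^ 2) • k) x) ((-f2 + (B ^ 2) • k) x)
      = (∫ x, inner ℝ (f2 x) (f2 x)) + B ^ 4 * (∫ x, inner ℝ (k x) (k x))
        - 2 * B ^ 2 * ∫ x, inner ℝ (k x) (f2 x) := by
    rw [← integral_const_mul, ← integral_const_mul,
      ← integral_add (aux_int _ _) ((aux_int _ _).const_mul _),
      ← integral_sub ((aux_int _ _).fun_add ((aux_int _ _).const_mul _)) ((aux_int _ _).const_mul _)]
    congr 1; funext x
    simp only [SchwartzMap.add_apply, SchwartzMap.neg_apply, SchwartzMap.smul_apply,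
      inner_add_left, inner_add_right, inner_neg_left, inner_neg_right, real_inner_smul_left,
      real_inner_smul_right, real_inner_comm (k x) (f2 x)]
    ring
  have I2 : ∫ x, inner ℝ (k x) (f2 x) =
      -(2 * (∫ x, inner ℝ (g x) (f1 x)) + ∫ x, inner ℝ (g1 x) (g1 x)) := by
    have := aux_ibp k f1
    simp only [e2] at this
    rw [this, ← integral_const_mul, ← integral_add ((aux_int _ _).const_mul _) (aux_int _ _)]
    congr 2; funext x
    simp only [dk, dg, hg, hg1, Complex.inner]
    simp
    ring
  have I3 : ∫ x, inner ℝ (g x) (f1 x) =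
      -((∫ x, inner ℝ (f x) (f x)) + ∫ x, inner ℝ (g x) (f1 x)) := by
    have := aux_ibp g f
    simp only [e1] at this
    rw [← integral_add (aux_int _ _) (aux_int _ _), this]
    congr 2; funext x
    simp only [dg, hg, hg1, Complex.inner]
    simp
    ring
  rw [I1, I2]
  linear_combination (2 * B ^ 2) * I3
end

section
/- Let B > 0. For every α > 0 there exists β > 0 such that for every complex-valued Schwartz function f on ℝ one has ‖x f‖ ≤ α‖−f'' + B²x²f‖ + β‖f‖, where x f denotes the function x ↦ x·f(x), x²f denotes x ↦ x²f(x), and f'' is the second derivative of f. -/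
open MeasureTheory

/-- The square of the L2 norm of a Schwartz function, as an integral. -/
lemma sq_L2norm (f : SchwartzMap ℝ ℂ) :
    (eLpNorm (fun x : ℝ => f x) 2 volume).toReal ^ 2 = ∫ x : ℝ, ‖f x‖ ^ 2 := by
  have h := f.memLp 2 volume
  have h0 : 0 ≤ ∫ x : ℝ, ‖f x‖ ^ 2 := integral_nonneg fun x => by positivity
  rw [toReal_eLpNorm h.aestronglyMeasurable,
    lpNorm_eq_integral_norm_rpow_toReal (by norm_num) (by norm_num) h.aestronglyMeasurable]
  simp only [ENNReal.toReal_ofNat, Real.rpow_ofNat]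
  rw [← Real.rpow_natCast, ← Real.rpow_mul h0]
  norm_num

lemma integrable_sq (f : SchwartzMap ℝ ℂ) : Integrable (fun x : ℝ => ‖f x‖ ^ 2) :=
  (f.memLp 2 volume).integrable_norm_pow (by norm_num)

/-- Let B > 0. For every α > 0 there exists β > 0 such that for every
complex-valued Schwartz function f on ℝ one has
‖x f‖ ≤ α‖−f'' + B²x²f‖ + β‖f‖. -/
theorem stmt_3 (B : ℝ) (hB : 0 < B) (α : ℝ) (hα : 0 < α) :
    ∃ β : ℝ, 0 < β ∧
      ∀ f : SchwartzMap ℝ ℂ,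
        (eLpNorm (fun x : ℝ => (x : ℂ) * f x) 2 volume).toReal ≤
          α * (eLpNorm (fun x : ℝ =>
              -(deriv (deriv f) x) + ((B ^ 2 * x ^ 2 : ℝ) : ℂ) * f x) 2 volume).toReal +
            β * (eLpNorm (fun x : ℝ => f x) 2 volume).toReal := by
  refine ⟨1 / (2 * α * B ^ 2), by positivity, fun f => ?_⟩
  set β : ℝ := 1 / (2 * α * B ^ 2) with hβ
  have hβ0 : 0 < β := by positivity
  let f1 := SchwartzMap.derivCLM ℝ ℂ f
  let f2 := SchwartzMap.derivCLM ℝ ℂ f1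
  let h := SchwartzMap.smulLeftCLM ℂ (fun x : ℝ => x) f
  let g := -f2 + (B ^ 2) • SchwartzMap.smulLeftCLM ℂ (fun x : ℝ => x) h
  have hx : (fun x : ℝ => x).HasTemperateGrowth := by fun_prop
  have eh : ∀ x, h x = (x : ℂ) * f x := fun x => by
    simp [h, SchwartzMap.smulLeftCLM_apply_apply hx]
  have e1 : (f1 : ℝ → ℂ) = deriv f := funext fun x => SchwartzMap.derivCLM_apply ℝ f x
  have e2 : ∀ x, f2 x = deriv (deriv f) x := fun x => by
    rw [← e1]; exact SchwartzMap.derivCLM_apply ℝ f1 x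
  have eg : ∀ x, g x = -(deriv (deriv f) x) + ((B ^ 2 * x ^ 2 : ℝ) : ℂ) * f x := fun x => by
    have : g x = -(f2 x) + (B ^ 2) • (SchwartzMap.smulLeftCLM ℂ (fun x : ℝ => x) h x) := rfl
    rw [this, SchwartzMap.smulLeftCLM_apply_apply hx, eh, e2]
    simp only [Complex.real_smul]
    push_cast
    ring
  simp_rw [← eg, ← eh]
  -- integration by parts
  have ibp : ∫ x : ℝ, inner ℝ (f x) (f2 x) = -∫ x : ℝ, ‖f1 x‖ ^ 2 := by
    have := SchwartzMap.integral_bilinear_deriv_right_eq_neg_left f f1 (innerSL ℝ)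
    simp_rw [← real_inner_self_eq_norm_sq, e2, e1]
    rw [e1] at this
    exact this
  have i2 : Integrable (fun x : ℝ => inner ℝ (f x) (f2 x)) :=
    (SchwartzMap.pairing (innerSL ℝ) f f2).integrable
  have pw : ∀ x, B ^ 2 * ‖h x‖ ^ 2 ≤
      B ^ 2 * α ^ 2 * ‖g x‖ ^ 2 + B ^ 2 * β ^ 2 * ‖f x‖ ^ 2 + inner ℝ (f x) (f2 x) := fun x => by
    have k1 : inner ℝ (f x) (g x) = - inner ℝ (f x) (f2 x) + B ^ 2 * ‖h x‖ ^ 2 := by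
      have : g x = -(f2 x) + (B ^ 2 * x ^ 2) • f x := by
        rw [eg, e2, Complex.real_smul]
      rw [this, inner_add_right, inner_neg_right, inner_smul_right, real_inner_self_eq_norm_sq,
        eh, norm_mul, mul_pow]
      simp
      ring
    have k2 : inner ℝ (f x) (g x) ≤ ‖f x‖ * ‖g x‖ := real_inner_le_norm _ _
    have k3 : ‖f x‖ * ‖g x‖ ≤ B ^ 2 * α ^ 2 * ‖g x‖ ^ 2 + B ^ 2 * β ^ 2 * ‖f x‖ ^ 2 := by
      have : 2 * B ^ 2 * α * β = 1 := by rw [hβ]; field_simp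
      have hs : 0 ≤ (B * α * ‖g x‖ - B * β * ‖f x‖) ^ 2 := sq_nonneg _
      linear_combination hs - ‖f x‖ * ‖g x‖ * this
    linarith
  have key : B ^ 2 * ∫ x : ℝ, ‖h x‖ ^ 2 ≤ B ^ 2 * α ^ 2 * (∫ x : ℝ, ‖g x‖ ^ 2)
      + B ^ 2 * β ^ 2 * (∫ x : ℝ, ‖f x‖ ^ 2) + ∫ x : ℝ, inner ℝ (f x) (f2 x) := by
    have ig := (integrable_sq g).const_mul (B ^ 2 * α ^ 2)
    have jf := (integrable_sq f).const_mul (B ^ 2 * β ^ 2)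
    rw [← integral_const_mul, ← integral_const_mul, ← integral_const_mul,
      ← integral_add ig jf]
    refine le_trans ?_ (integral_add (ig.add jf) i2).le
    exact integral_mono ((integrable_sq h).const_mul _) ((ig.add jf).add i2) pw
  have n1 : 0 ≤ ∫ x : ℝ, ‖f1 x‖ ^ 2 := integral_nonneg fun x => by positivity
  rw [ibp, ← sq_L2norm, ← sq_L2norm, ← sq_L2norm] at key
  set H := (eLpNorm (fun x : ℝ => h x) 2 volume).toReal
  set G := (eLpNorm (fun x : ℝ => g x) 2 volume).toReal with hG
  set F := (eLpNorm (fun x : ℝ => f x) 2 volume).toReal with hF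
  have hG0 : 0 ≤ G := ENNReal.toReal_nonneg
  have hF0 : 0 ≤ F := ENNReal.toReal_nonneg
  have k : H ^ 2 ≤ α ^ 2 * G ^ 2 + β ^ 2 * F ^ 2 := by
    refine le_of_mul_le_mul_left (?_ : B ^ 2 * _ ≤ B ^ 2 * _) (by positivity)
    linarith
  refine le_of_sq_le_sq ?_ (by positivity)
  have : 0 ≤ (α * G) * (β * F) := by positivity
  nlinarith
end

section
/- Let B > 0, p ∈ ℝ, and let g : ℝ → ℝ be bounded and measurable. For every α > 0 there exists β > 0 such that for every complex-valued Schwartz function f on ℝ one has ‖x ↦ g(x)(2p + 2Bx + g(x))·f(x)‖ ≤ α‖−f'' + B²x²f‖ + β‖f‖. -/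
open MeasureTheory

/-- Energy estimate: multiplication by `B x` is controlled by the harmonic oscillator. -/
theorem energy_aux (B : ℝ) (f u h : SchwartzMap ℝ ℂ)
    (hu : ∀ x, u x = ((B * x : ℝ) : ℂ) * f x)
    (hh : ∀ x, h x = -(deriv (deriv f) x) + ((B ^ 2 * x ^ 2 : ℝ) : ℂ) * f x) :
    ‖u.toLp 2 volume‖ ^ 2 ≤ ‖h.toLp 2 volume‖ * ‖f.toLp 2 volume‖ := by
  set d := SchwartzMap.derivCLM ℝ ℂ f with hd
  have hdd : (d : ℝ → ℂ) = deriv f := by ext x; rfl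
  have hI : ∀ a b : SchwartzMap ℝ ℂ, Integrable (fun x => (inner ℂ (a x) (b x) : ℂ)) := by
    intro a b
    exact MemLp.integrable_mul (p := 2) (q := 2) (b.memLp 2 volume) (a.memLp 2 volume).star
  have hIr : ∀ a b : SchwartzMap ℝ ℂ, Integrable (fun x => (inner ℝ (a x) (b x) : ℝ)) := by
    intro a b
    exact (hI a b).re
  have hre : ∀ a b : SchwartzMap ℝ ℂ,
      RCLike.re (inner ℂ (a.toLp 2 volume) (b.toLp 2 volume)) = ∫ x, (inner ℝ (a x) (b x) : ℝ) := by
    intro a b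
    rw [SchwartzMap.inner_toL2_toL2_eq a b volume]
    exact (integral_re (hI a b)).symm
  have ibp := SchwartzMap.integral_bilinear_deriv_right_eq_neg_left f d (innerSL ℝ)
  rw [hdd] at ibp
  have ibp' : ∫ x, (inner ℝ (f x) (deriv (deriv f) x) : ℝ) = - ∫ x, (inner ℝ (d x) (d x) : ℝ) := by
    rw [hdd]; exact ibp
  have hsq : ‖u.toLp 2 volume‖ ^ 2 = ∫ x, (inner ℝ (u x) (u x) : ℝ) := by
    rw [← hre, ← norm_sq_eq_re_inner]
  have hpos : 0 ≤ ∫ x, (inner ℝ (d x) (d x) : ℝ) := integral_nonneg fun x => real_inner_self_nonneg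
  have hmain : ∫ x, (inner ℝ (f x) (h x) : ℝ) =
      (∫ x, (inner ℝ (d x) (d x) : ℝ)) + ∫ x, (inner ℝ (u x) (u x) : ℝ) := by
    rw [← neg_eq_iff_eq_neg.mpr ibp', ← integral_neg, ← integral_add]
    · congr 1
      ext x
      rw [hh, hu, inner_add_right, inner_neg_right]
      congr 1
      rw [← Complex.real_smul, ← Complex.real_smul, inner_smul_right, inner_smul_right,
        real_inner_smul_left]
      ring
    · have := (hIr f (SchwartzMap.derivCLM ℝ ℂ d)).neg
      have e : ((SchwartzMap.derivCLM ℝ ℂ d : SchwartzMap ℝ ℂ) : ℝ → ℂ) = deriv (deriv f) := by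
        rw [← hdd]; ext x; rfl
      rw [e] at this
      exact this
    · exact hIr u u
  have hcs : ∫ x, (inner ℝ (f x) (h x) : ℝ) ≤ ‖f.toLp 2 volume‖ * ‖h.toLp 2 volume‖ := by
    rw [← hre]
    exact (RCLike.re_le_norm _).trans (norm_inner_le_norm _ _)
  nlinarith

/-- Let B > 0, p ∈ ℝ, and let g : ℝ → ℝ be bounded and measurable. For every
α > 0 there exists β > 0 such that for every complex-valued Schwartz function f
on ℝ one has ‖x ↦ g(x)(2p + 2Bx + g(x))·f(x)‖ ≤ α‖−f'' + B²x²f‖ + β‖f‖. -/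
theorem stmt_4 (B : ℝ) (hB : 0 < B) (p : ℝ) (g : ℝ → ℝ)
    (hg : Measurable g) (hbd : ∃ M : ℝ, ∀ x : ℝ, |g x| ≤ M) (α : ℝ) (hα : 0 < α) :
    ∃ β : ℝ, 0 < β ∧
      ∀ f : SchwartzMap ℝ ℂ,
        (eLpNorm (fun x : ℝ =>
            ((g x * (2 * p + 2 * B * x + g x) : ℝ) : ℂ) * f x) 2 volume).toReal ≤
          α * (eLpNorm (fun x : ℝ =>
              -(deriv (deriv f) x) + ((B ^ 2 * x ^ 2 : ℝ) : ℂ) * f x) 2 volume).toReal +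
            β * (eLpNorm (fun x : ℝ => f x) 2 volume).toReal := by
  obtain ⟨M, hM⟩ := hbd
  have hM0 : 0 ≤ M := (abs_nonneg _).trans (hM 0)
  set K := M * (2 * |p| + M) with hK
  have hK0 : 0 ≤ K := by positivity
  refine ⟨M ^ 2 / α + K + 1, by positivity, fun f => ?_⟩
  have t1 : Function.HasTemperateGrowth (fun x : ℝ => B * x) := by fun_prop
  have t2 : Function.HasTemperateGrowth (fun x : ℝ => B ^ 2 * x ^ 2) := by fun_prop
  set u : SchwartzMap ℝ ℂ := SchwartzMap.smulLeftCLM ℂ (fun x : ℝ => B * x) f with hudef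
  set h : SchwartzMap ℝ ℂ := -(SchwartzMap.derivCLM ℝ ℂ (SchwartzMap.derivCLM ℝ ℂ f)) +
    SchwartzMap.smulLeftCLM ℂ (fun x : ℝ => B ^ 2 * x ^ 2) f with hhdef
  have hu : ∀ x, u x = ((B * x : ℝ) : ℂ) * f x := fun x => by
    rw [hudef, SchwartzMap.smulLeftCLM_apply_apply t1, Complex.real_smul]
  have hh : ∀ x, h x = -(deriv (deriv f) x) + ((B ^ 2 * x ^ 2 : ℝ) : ℂ) * f x := fun x => by
    rw [hhdef, add_apply, SchwartzMap.smulLeftCLM_apply_apply t2, Complex.real_smul]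
    rfl
  have key := energy_aux B f u h hu hh
  have e1 : (fun x : ℝ => -(deriv (deriv f) x) + ((B ^ 2 * x ^ 2 : ℝ) : ℂ) * f x) = h :=
    (funext hh).symm
  rw [e1]
  rw [SchwartzMap.norm_toLp, SchwartzMap.norm_toLp, SchwartzMap.norm_toLp] at key
  have hum := u.memLp 2 volume
  have hfm := f.memLp 2 volume
  -- pointwise bound and triangle inequality
  have hb : (eLpNorm (fun x : ℝ =>
      ((g x * (2 * p + 2 * B * x + g x) : ℝ) : ℂ) * f x) 2 volume).toReal ≤
      2 * M * (eLpNorm u 2 volume).toReal + K * (eLpNorm f 2 volume).toReal := by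
    have hm1 : MemLp (fun x => 2 * M * ‖u x‖) 2 volume := hum.norm.const_mul _
    have hm2 : MemLp (fun x => K * ‖f x‖) 2 volume := hfm.norm.const_mul _
    have h1 : eLpNorm (fun x : ℝ =>
        ((g x * (2 * p + 2 * B * x + g x) : ℝ) : ℂ) * f x) 2 volume ≤
        eLpNorm ((fun x => 2 * M * ‖u x‖) + (fun x => K * ‖f x‖)) 2 volume := by
      apply eLpNorm_mono_real
      intro x
      rw [Pi.add_apply, hu, norm_mul, norm_mul, Complex.norm_real, Complex.norm_real,
        Real.norm_eq_abs, Real.norm_eq_abs, abs_mul, ← mul_assoc, ← add_mul]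
      gcongr
      have a1 : |2 * p + 2 * B * x + g x| ≤ 2 * |p| + 2 * |B * x| + M := by
        have := abs_add_three (2 * p) (2 * B * x) (g x)
        rw [mul_assoc 2 B x, abs_mul 2, abs_mul 2, abs_two] at this
        rw [mul_assoc 2 B x]
        linarith [hM x]
      calc |g x| * |2 * p + 2 * B * x + g x| ≤ M * (2 * |p| + 2 * |B * x| + M) := by
            gcongr
            exact hM x
        _ = _ := by rw [hK]; ring
    have h2 := eLpNorm_add_le (p := 2) hm1.1 hm2.1 (by norm_num)
    have h3 := ENNReal.toReal_mono (ENNReal.add_ne_top.2 ⟨hm1.2.ne, hm2.2.ne⟩) (h1.trans h2)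
    rw [ENNReal.toReal_add hm1.2.ne hm2.2.ne] at h3
    have c1 : ∀ (c : ℝ) (_ : 0 ≤ c) (w : SchwartzMap ℝ ℂ),
        (eLpNorm (fun x => c * ‖w x‖) 2 volume).toReal = c * (eLpNorm w 2 volume).toReal := by
      intro c hc w
      have := eLpNorm_const_smul c (fun x => ‖w x‖) 2 (volume : Measure ℝ)
      rw [eLpNorm_norm] at this
      have h' : (c • fun x => ‖w x‖) = fun x => c * ‖w x‖ := rfl
      rw [h'] at this
      rw [this, ENNReal.toReal_mul]
      simp [abs_of_nonneg hc]
    rwa [c1 _ (by positivity), c1 _ hK0] at h3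
  set U := (eLpNorm u 2 volume).toReal
  set H := (eLpNorm h 2 volume).toReal
  change _ ≤ α * H + _ * (eLpNorm f 2 volume).toReal
  set F := (eLpNorm f 2 volume).toReal
  have hU : 0 ≤ U := ENNReal.toReal_nonneg
  have hH : 0 ≤ H := ENNReal.toReal_nonneg
  have hF : 0 ≤ F := ENNReal.toReal_nonneg
  have hfin : 2 * M * U ≤ α * H + M ^ 2 / α * F := by
    apply abs_le_of_sq_le_sq' _ (by positivity) |>.2
    have e : α * H * (M ^ 2 / α * F) = M ^ 2 * (H * F) := by field_simp
    nlinarith [sq_nonneg (α * H - M ^ 2 / α * F), mul_le_mul_of_nonneg_left key (sq_nonneg M)]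
  linarith
end

section
/- Let ψ : ℝ → ℝ be twice differentiable with ψ''(x) = Q(x)ψ(x) for all x ∈ ℝ, where Q(x) := (p + Bx + A(x))² − ε. Assume that the function x ↦ (p + Bx + A(x))ψ(x)² is Lebesgue integrable on ℝ and that ψ'(x)² − Q(x)ψ(x)² → 0 as x → +∞ and as x → −∞. Then ∫_ℝ (p + Bx + A(x))ψ(x)² dx = −(1/B)·∫_{−a}^{a} b(x)(p + Bx + A(x))ψ(x)² dx. -/
open MeasureTheory Filter

/-- Feynman–Hellmann identity: for a solution ψ of ψ'' = Q ψ with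
Q(x) = (p + Bx + A(x))² − ε and A(x) = ∫₀ˣ b, if (p + Bx + A(x))ψ(x)² is
integrable and ψ'² − Qψ² → 0 at ±∞, then
∫ℝ (p + Bx + A(x))ψ(x)² dx = −(1/B)·∫₋ₐᵃ b(x)(p + Bx + A(x))ψ(x)² dx. -/
theorem stmt_7 (B a : ℝ) (hB : 0 < B) (ha : 0 < a)
    (b : ℝ → ℝ) (hb_cont : Continuous b) (hb_bd : ∃ M : ℝ, ∀ x : ℝ, |b x| ≤ M)
    (hb_supp : Function.support b ⊆ Set.Icc (-a) a)
    (A : ℝ → ℝ) (hA : ∀ x : ℝ, A x = ∫ t in (0 : ℝ)..x, b t)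
    (p ε : ℝ) (Q : ℝ → ℝ) (hQ : ∀ x : ℝ, Q x = (p + B * x + A x) ^ 2 - ε)
    (ψ : ℝ → ℝ) (hψ : Differentiable ℝ ψ) (hψ' : Differentiable ℝ (deriv ψ))
    (hode : ∀ x : ℝ, deriv (deriv ψ) x = Q x * ψ x)
    (hint : Integrable (fun x : ℝ => (p + B * x + A x) * ψ x ^ 2) volume)
    (htop : Tendsto (fun x : ℝ => (deriv ψ x) ^ 2 - Q x * ψ x ^ 2) atTop (nhds 0))
    (hbot : Tendsto (fun x : ℝ => (deriv ψ x) ^ 2 - Q x * ψ x ^ 2) atBot (nhds 0)) :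
    ∫ x : ℝ, (p + B * x + A x) * ψ x ^ 2 =
      -(1 / B) * ∫ x in (-a)..a, b x * (p + B * x + A x) * ψ x ^ 2 := by
  obtain ⟨M, hM⟩ := hb_bd
  have hAd : ∀ x, HasDerivAt A (b x) x := by
    intro x
    have h : A = fun x => ∫ t in (0 : ℝ)..x, b t := funext hA
    rw [h]
    exact intervalIntegral.integral_hasDerivAt_right (hb_cont.intervalIntegrable _ _)
      hb_cont.stronglyMeasurable.stronglyMeasurableAtFilter hb_cont.continuousAt
  have hWd : ∀ x, HasDerivAt (fun x => p + B * x + A x) (B + b x) x := by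
    intro x
    have h := (((hasDerivAt_id x).const_mul B).const_add p).add (hAd x)
    refine HasDerivAt.congr_deriv h ?_
    simp
  have hQd : ∀ x, HasDerivAt Q (2 * (p + B * x + A x) * (B + b x)) x := by
    intro x
    have h : Q = fun x => (p + B * x + A x) ^ 2 - ε := funext hQ
    rw [h]
    have h2 := ((hWd x).pow 2).sub_const ε
    refine HasDerivAt.congr_deriv h2 ?_
    simp
  have hFd : ∀ x, HasDerivAt (fun x : ℝ => (deriv ψ x) ^ 2 - Q x * ψ x ^ 2)
      (-2 * (B * ((p + B * x + A x) * ψ x ^ 2) + b x * ((p + B * x + A x) * ψ x ^ 2))) x := by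
    intro x
    have h1 := (hψ' x).hasDerivAt
    rw [hode] at h1
    have h2 := (h1.pow 2).sub ((hQd x).mul ((hψ x).hasDerivAt.pow 2))
    refine HasDerivAt.congr_deriv h2 ?_
    simp
    ring
  have hbi : Integrable (fun x : ℝ => b x * ((p + B * x + A x) * ψ x ^ 2)) volume :=
    hint.bdd_mul (c := M) hb_cont.aestronglyMeasurable
      (Eventually.of_forall fun x => by simpa using hM x)
  have key := integral_of_hasDerivAt_of_tendsto hFd
    (((hint.const_mul B).add hbi).const_mul (-2)) hbot htop
  rw [integral_const_mul, integral_add (hint.const_mul B) hbi, integral_const_mul] at key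
  have hs : ∫ x in (-a)..a, b x * (p + B * x + A x) * ψ x ^ 2
      = ∫ x, b x * ((p + B * x + A x) * ψ x ^ 2) := by
    rw [intervalIntegral.integral_of_le (by linarith), ← integral_Icc_eq_integral_Ioc,
      setIntegral_eq_integral_of_forall_compl_eq_zero]
    · simp only [mul_assoc]
    · intro x hx
      have : b x = 0 := by
        by_contra h
        exact hx (hb_supp h)
      simp [this]
  rw [hs]
  generalize (∫ x, b x * ((p + B * x + A x) * ψ x ^ 2)) = I at *
  generalize (∫ x, (p + B * x + A x) * ψ x ^ 2) = J at *
  field_simp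
  linarith
end

section
/- Let ψ : ℝ → ℝ be twice differentiable, not identically zero, with ψ''(x) = Q(x)ψ(x) for all x ∈ ℝ, where Q(x) := (p + Bx + A(x))² − ε. Assume that the function x ↦ (p + Bx + A(x))ψ(x)² is Lebesgue integrable on ℝ and that ψ'(x)² − Q(x)ψ(x)² → 0 as x → ±∞. Assume further that b(x) ≥ 0 for all x, that b(x₁) > 0 for some x₁ ∈ (−a, a), and that p + Bx + A(x) > 0 for all x ∈ [−a, a]. Then ∫_ℝ (p + Bx + A(x))ψ(x)² dx < 0. -/
open MeasureTheory Filter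

theorem linear_ode_zero (Q ψ : ℝ → ℝ) (hQc : Continuous Q)
    (hψ : Differentiable ℝ ψ) (hψ' : Differentiable ℝ (deriv ψ))
    (hode : ∀ x : ℝ, deriv (deriv ψ) x = Q x * ψ x)
    (x₁ : ℝ) (h0 : ψ x₁ = 0) (h1 : deriv ψ x₁ = 0) : ψ = 0 := by
  funext y
  set R : ℝ := |x₁| + |y| + 1 with hR
  have hx : x₁ ∈ Set.Ioo (-R) R := by
    have := abs_nonneg y
    rw [Set.mem_Ioo, ← abs_lt]; linarith
  have hy : y ∈ Set.Ioo (-R) R := by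
    have := abs_nonneg x₁
    rw [Set.mem_Ioo, ← abs_lt]; linarith
  obtain ⟨C, hC⟩ := (isCompact_Icc (a := -R) (b := R)).exists_bound_of_continuousOn
    hQc.continuousOn
  have key := ODE_solution_unique_of_mem_Ioo (E := ℝ × ℝ)
    (v := fun t z => (z.2, Q t * z.1)) (s := fun _ => Set.univ)
    (K := Real.toNNReal (max 1 C)) (f := fun t => (ψ t, deriv ψ t)) (g := fun _ => (0, 0))
    (a := -R) (b := R) (t₀ := x₁) ?_ hx ?_ ?_ ?_
  · have := key hy
    simpa using congrArg Prod.fst this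
  · intro t ht
    apply LipschitzWith.lipschitzOnWith
    apply LipschitzWith.of_dist_le_mul
    intro z w
    have hK : (1 : ℝ) ≤ max 1 C := le_max_left _ _
    rw [Real.coe_toNNReal _ (by linarith)]
    have hCt : |Q t| ≤ max 1 C :=
      (hC t (Set.Ioo_subset_Icc_self ht)).trans (le_max_right _ _)
    have d1 : dist z.1 w.1 ≤ dist z w := by rw [Prod.dist_eq]; exact le_max_left _ _
    have d2 : dist z.2 w.2 ≤ dist z w := by rw [Prod.dist_eq]; exact le_max_right _ _
    have d0 : 0 ≤ dist z w := dist_nonneg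
    rw [Prod.dist_eq (x := (z.2, Q t * z.1))]
    apply max_le
    · exact d2.trans (by nlinarith)
    · have : dist (Q t * z.1) (Q t * w.1) = |Q t| * dist z.1 w.1 := by
        rw [Real.dist_eq, Real.dist_eq, ← mul_sub, abs_mul]
      simp only [this]
      exact mul_le_mul hCt d1 dist_nonneg (by linarith)
  · intro t _
    refine ⟨?_, Set.mem_univ _⟩
    have h2 := (hψ' t).hasDerivAt
    rw [hode] at h2
    exact (hψ t).hasDerivAt.prodMk h2
  · intro t _
    refine ⟨?_, Set.mem_univ _⟩
    exact (hasDerivAt_const t ((0 : ℝ), (0 : ℝ))).congr_deriv (by simp; rfl)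
  · simp [h0, h1]

/-- If moreover ψ is not identically zero, b ≥ 0 with b(x₁) > 0 for some
x₁ ∈ (−a, a), and p + Bx + A(x) > 0 on [−a, a], then
∫ℝ (p + Bx + A(x))ψ(x)² dx < 0. -/
theorem stmt_8 (B a : ℝ) (hB : 0 < B) (ha : 0 < a)
    (b : ℝ → ℝ) (hb_cont : Continuous b) (hb_bd : ∃ M : ℝ, ∀ x : ℝ, |b x| ≤ M)
    (hb_supp : Function.support b ⊆ Set.Icc (-a) a)
    (A : ℝ → ℝ) (hA : ∀ x : ℝ, A x = ∫ t in (0 : ℝ)..x, b t)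
    (p ε : ℝ) (Q : ℝ → ℝ) (hQ : ∀ x : ℝ, Q x = (p + B * x + A x) ^ 2 - ε)
    (ψ : ℝ → ℝ) (hψ : Differentiable ℝ ψ) (hψ' : Differentiable ℝ (deriv ψ))
    (hψ_ne : ψ ≠ 0)
    (hode : ∀ x : ℝ, deriv (deriv ψ) x = Q x * ψ x)
    (hint : Integrable (fun x : ℝ => (p + B * x + A x) * ψ x ^ 2) volume)
    (htop : Tendsto (fun x : ℝ => (deriv ψ x) ^ 2 - Q x * ψ x ^ 2) atTop (nhds 0))
    (hbot : Tendsto (fun x : ℝ => (deriv ψ x) ^ 2 - Q x * ψ x ^ 2) atBot (nhds 0))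
    (hb_nonneg : ∀ x : ℝ, 0 ≤ b x)
    (hb_pos : ∃ x₁ ∈ Set.Ioo (-a) a, 0 < b x₁)
    (hmom : ∀ x ∈ Set.Icc (-a) a, 0 < p + B * x + A x) :
    (∫ x : ℝ, (p + B * x + A x) * ψ x ^ 2) < 0 := by
  have hAd : ∀ x, HasDerivAt A (b x) x := by
    intro x
    have : A = fun x => ∫ t in (0 : ℝ)..x, b t := funext hA
    rw [this]
    exact intervalIntegral.integral_hasDerivAt_right (hb_cont.intervalIntegrable _ _)
      hb_cont.stronglyMeasurable.stronglyMeasurableAtFilter hb_cont.continuousAt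
  have hPd : ∀ x, HasDerivAt (fun x => p + B * x + A x) (B + b x) x := by
    intro x
    have := (((hasDerivAt_id x).const_mul B).const_add p).add (hAd x)
    exact HasDerivAt.congr_deriv (f := fun x => p + B * x + A x) this (by ring)
  have hPc : Continuous (fun x => p + B * x + A x) :=
    continuous_iff_continuousAt.2 fun x => (hPd x).continuousAt
  have hQd : ∀ x, HasDerivAt Q (2 * (p + B * x + A x) * (B + b x)) x := by
    intro x
    rw [show Q = fun x => (p + B * x + A x) ^ 2 - ε from funext hQ]
    have := ((hPd x).pow 2).sub_const ε
    exact HasDerivAt.congr_deriv (f := fun x => (p + B * x + A x) ^ 2 - ε) this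
      (by push_cast; ring)
  have hQc : Continuous Q := continuous_iff_continuousAt.2 fun x => (hQd x).continuousAt
  obtain ⟨M, hM⟩ := hb_bd
  have hbi : Integrable (fun x => b x * ((p + B * x + A x) * ψ x ^ 2)) :=
    hint.bdd_mul (c := M) hb_cont.aestronglyMeasurable (Eventually.of_forall hM)
  have hEd : ∀ x, HasDerivAt (fun x : ℝ => (deriv ψ x) ^ 2 - Q x * ψ x ^ 2)
      (-2 * (B * ((p + B * x + A x) * ψ x ^ 2) + b x * ((p + B * x + A x) * ψ x ^ 2))) x := by
    intro x
    have h2 := (hψ' x).hasDerivAt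
    rw [hode] at h2
    have := (h2.pow 2).sub ((hQd x).mul ((hψ x).hasDerivAt.pow 2))
    refine HasDerivAt.congr_deriv (f := fun x : ℝ => (deriv ψ x) ^ 2 - Q x * ψ x ^ 2) this ?_
    simp only [Pi.pow_apply]
    push_cast
    ring
  have h0 := integral_of_hasDerivAt_of_tendsto hEd
    (((hint.const_mul B).add hbi).const_mul (-2)) hbot htop
  rw [integral_const_mul, integral_add (hint.const_mul B) hbi, integral_const_mul] at h0
  have hsupp : ∀ x, x ∉ Set.Icc (-a) a → b x = 0 := fun x hx => by
    by_contra h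
    exact hx (hb_supp h)
  have hnn : 0 ≤ (fun x => b x * ((p + B * x + A x) * ψ x ^ 2)) := by
    intro x
    by_cases hx : x ∈ Set.Icc (-a) a
    · exact mul_nonneg (hb_nonneg x) (mul_nonneg (hmom x hx).le (sq_nonneg _))
    · simp [hsupp x hx]
  obtain ⟨x₁, hx₁, hbx⟩ := hb_pos
  have hex : ∃ x, b x * ((p + B * x + A x) * ψ x ^ 2) ≠ 0 := by
    by_contra! hall
    have hz : ψ =ᶠ[nhds x₁] fun _ => 0 := by
      filter_upwards [isOpen_Ioo.mem_nhds hx₁, hb_cont.continuousAt.eventually (lt_mem_nhds hbx)]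
        with x hx hb
      have h1 := hall x
      have h2 := hmom x (Set.Ioo_subset_Icc_self hx)
      simpa [hb.ne', h2.ne'] using h1
    apply hψ_ne
    refine linear_ode_zero Q ψ hQc hψ hψ' hode x₁ hz.eq_of_nhds ?_
    rw [hz.deriv_eq]
    simp
  obtain ⟨x, hx⟩ := hex
  have hpos := integral_pos_of_integrable_nonneg_nonzero (μ := volume)
    (hb_cont.mul (hPc.mul (hψ.continuous.pow 2))) hbi hnn hx
  by_contra! hcon
  have := mul_nonneg hB.le hcon
  simp only [Pi.mul_apply, Pi.pow_apply] at *
  linarith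
end

section
/- Let B > 0, a > 0, p₀ ∈ ℝ, let b : ℝ → ℝ be bounded and measurable with support contained in [−a, a], set A(x) := ∫₀ˣ b(t) dt and a⁻ := A(−a). Then there exist constants C > 0 and E₁ > 0 such that for all E ≥ E₁, ∫_{−a}^{a} | √(max(E − (p₀ + Bx + A(x))², 0)) − √(max(E − (p₀ + Bx + a⁻)², 0)) | dx ≤ C·E^{−1/2}. -/
open MeasureTheory

lemma strip_aux (E u K : ℝ) (hE : 0 < E) (hK : |u| ≤ K) :
    Real.sqrt E - K ^ 2 / Real.sqrt E ≤ Real.sqrt (max (E - u ^ 2) 0) ∧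
      Real.sqrt (max (E - u ^ 2) 0) ≤ Real.sqrt E := by
  have hs : 0 < Real.sqrt E := Real.sqrt_pos.2 hE
  have hu : u ^ 2 ≤ K ^ 2 := by
    rw [← sq_abs u]
    exact pow_le_pow_left₀ (abs_nonneg u) hK 2
  have hle : Real.sqrt (max (E - u ^ 2) 0) ≤ Real.sqrt E := by
    apply Real.sqrt_le_sqrt
    exact max_le (by nlinarith [sq_nonneg u]) hE.le
  refine ⟨?_, hle⟩
  have h1 : Real.sqrt E * Real.sqrt E = E := Real.mul_self_sqrt hE.le
  have h2 : Real.sqrt (max (E - u ^ 2) 0) * Real.sqrt (max (E - u ^ 2) 0)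
      = max (E - u ^ 2) 0 := Real.mul_self_sqrt (le_max_right _ _)
  have h3 := le_max_left (E - u ^ 2) 0
  have h4 := mul_le_mul_of_nonneg_left hle (Real.sqrt_nonneg (max (E - u ^ 2) 0))
  rw [sub_le_iff_le_add, ← sub_le_iff_le_add', le_div_iff₀ hs]
  nlinarith

/-- The contribution of the strip [−a, a] in the Bohr–Sommerfeld comparison is
O(E^{−1/2}) as E → ∞. -/
theorem stmt_13 (B a p₀ : ℝ) (hB : 0 < B) (ha : 0 < a)
    (b : ℝ → ℝ) (hb_meas : Measurable b) (hb_bd : ∃ M : ℝ, ∀ x : ℝ, |b x| ≤ M)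
    (hb_supp : Function.support b ⊆ Set.Icc (-a) a)
    (A : ℝ → ℝ) (hA : ∀ x : ℝ, A x = ∫ t in (0 : ℝ)..x, b t) :
    ∃ C E₁ : ℝ, 0 < C ∧ 0 < E₁ ∧
      ∀ E : ℝ, E₁ ≤ E →
        (∫ x in (-a)..a,
            |Real.sqrt (max (E - (p₀ + B * x + A x) ^ 2) 0) -
              Real.sqrt (max (E - (p₀ + B * x + A (-a)) ^ 2) 0)|) ≤
          C / Real.sqrt E := by
  obtain ⟨M, hM⟩ := hb_bd
  have hM0 : 0 ≤ M := (abs_nonneg _).trans (hM 0)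
  have hAb : ∀ x : ℝ, |x| ≤ a → |A x| ≤ M * a := by
    intro x hx
    have h := intervalIntegral.norm_integral_le_of_norm_le_const
      (a := (0 : ℝ)) (b := x) (f := b) (C := M) (fun t _ => hM t)
    rw [← hA, Real.norm_eq_abs, sub_zero] at h
    exact h.trans (mul_le_mul_of_nonneg_left hx hM0)
  obtain ⟨K, hKdef⟩ : ∃ K : ℝ, K = |p₀| + B * a + M * a := ⟨_, rfl⟩
  have hK : 0 < K := by
    have := mul_pos hB ha
    have := mul_nonneg hM0 ha.le
    have := abs_nonneg p₀
    linarith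
  have hbound : ∀ x y : ℝ, |x| ≤ a → |y| ≤ M * a → |p₀ + B * x + y| ≤ K := by
    intro x y hx hy
    have h1 := abs_add_three p₀ (B * x) y
    have h2 : |B * x| ≤ B * a := by
      rw [abs_mul, abs_of_pos hB]
      exact mul_le_mul_of_nonneg_left hx hB.le
    linarith
  refine ⟨K ^ 2 * (2 * a), 1, by positivity, one_pos, ?_⟩
  intro E hE
  have hE0 : 0 < E := by linarith
  have key := intervalIntegral.norm_integral_le_of_norm_le_const
    (a := -a) (b := a) (C := K ^ 2 / Real.sqrt E)
    (f := fun x => |Real.sqrt (max (E - (p₀ + B * x + A x) ^ 2) 0) -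
              Real.sqrt (max (E - (p₀ + B * x + A (-a)) ^ 2) 0)|) (by
      intro x hx
      rw [Set.uIoc_of_le (by linarith)] at hx
      have hx' : |x| ≤ a := abs_le.2 ⟨hx.1.le, hx.2⟩
      have ha' : |(-a)| ≤ a := by rw [abs_neg, abs_of_pos ha]
      obtain ⟨l1, u1⟩ := strip_aux E _ K hE0 (hbound x (A x) hx' (hAb x hx'))
      obtain ⟨l2, u2⟩ := strip_aux E _ K hE0 (hbound x (A (-a)) hx' (hAb _ ha'))
      rw [Real.norm_eq_abs, abs_abs, abs_le]
      constructor <;> linarith)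
  refine (Real.le_norm_self _).trans (key.trans (le_of_eq ?_))
  rw [abs_of_pos (by linarith)]
  ring
end

section
/- Let B > 0, a > 0, let b : ℝ → ℝ be bounded and measurable with support contained in [−a, a], set A(x) := ∫₀ˣ b(t) dt, a⁻ := A(−a), a⁺ := A(a), and assume a⁻ > a⁺ (equivalently ∫_{−a}^{a} b(x) dx < 0). Fix p₀ ≥ −a⁺ − aB. Then ∫_ℝ [ √(max(E − (p₀ + Bx + A(x))², 0)) − √(max(E − (p₀ + Bx + a⁻)², 0)) ] dx → +∞ as E → +∞. -/
open MeasureTheory Filter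

lemma phase_integrable (B p : ℝ) (hB : 0 < B) (A : ℝ → ℝ) (hc : Continuous A) (C : ℝ)
    (hC : ∀ x, |A x| ≤ C) (E : ℝ) :
    Integrable (fun x => Real.sqrt (max (E - (p + B * x + A x) ^ 2) 0)) := by
  apply Continuous.integrable_of_hasCompactSupport
  · fun_prop
  · apply HasCompactSupport.intro
      (isCompact_Icc (a := -((Real.sqrt E + |p| + C) / B)) (b := (Real.sqrt E + |p| + C) / B))
    intro x hx
    rw [Real.sqrt_eq_zero']
    apply max_le _ le_rfl
    by_contra! h
    apply hx
    have h1 : |p + B * x + A x| ≤ Real.sqrt E := Real.abs_le_sqrt (by linarith)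
    have h2 := abs_le.1 h1
    have h3 := abs_le.1 (hC x)
    have h4 := le_abs_self p
    have h5 := neg_abs_le p
    constructor
    · rw [neg_le, le_div_iff₀ hB]; nlinarith
    · rw [le_div_iff₀ hB]; nlinarith

lemma phase_lower (E u : ℝ) :
    Real.sqrt E - |u| ≤ Real.sqrt (max (E - u ^ 2) 0) := by
  have h0 := Real.sqrt_nonneg (max (E - u ^ 2) 0)
  have h1 := Real.sq_sqrt (le_max_right (E - u ^ 2) 0)
  have h2 := le_max_left (E - u ^ 2) 0
  have h3 := abs_nonneg u
  have : Real.sqrt E ≤ |u| + Real.sqrt (max (E - u ^ 2) 0) := by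
    apply Real.sqrt_le_iff.2
    constructor
    · positivity
    · nlinarith [sq_abs u, mul_nonneg h3 h0]
  linarith

lemma phase_upper (E u : ℝ) (hE : 0 ≤ E) :
    Real.sqrt (max (E - u ^ 2) 0) ≤ Real.sqrt E := by
  apply Real.sqrt_le_sqrt
  exact max_le (by nlinarith [sq_nonneg u]) hE

/-- Proposition 3.1 (analytic content): when the field variation has negative
mean (a⁻ > a⁺) and p₀ ≥ −a⁺ − aB, the difference of Bohr–Sommerfeld phase
integrals diverges as E → ∞. -/
theorem stmt_14 (B a : ℝ) (hB : 0 < B) (ha : 0 < a)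
    (b : ℝ → ℝ) (hb_meas : Measurable b) (hb_bd : ∃ M : ℝ, ∀ x : ℝ, |b x| ≤ M)
    (hb_supp : Function.support b ⊆ Set.Icc (-a) a)
    (A : ℝ → ℝ) (hA : ∀ x : ℝ, A x = ∫ t in (0 : ℝ)..x, b t)
    (hmean : A a < A (-a))
    (p₀ : ℝ) (hp₀ : -(A a) - a * B ≤ p₀) :
    Tendsto (fun E : ℝ =>
        ∫ x : ℝ,
          (Real.sqrt (max (E - (p₀ + B * x + A x) ^ 2) 0) -
            Real.sqrt (max (E - (p₀ + B * x + A (-a)) ^ 2) 0)))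
      atTop atTop := by
  obtain ⟨M, hM⟩ := hb_bd
  have hbi : ∀ x y : ℝ, IntervalIntegrable b volume x y := by
    intro x y
    apply (intervalIntegrable_const (c := M)).mono_fun' hb_meas.aestronglyMeasurable
    exact Eventually.of_forall hM
  have hAc : Continuous A := by
    rw [show A = fun x => ∫ t in (0 : ℝ)..x, b t from funext hA]
    exact intervalIntegral.continuous_primitive hbi 0
  have hb0 : ∀ x, x ∉ Set.Icc (-a) a → b x = 0 := by
    intro x hx
    by_contra h
    exact hx (hb_supp h)
  have hR : ∀ x, a ≤ x → A x = A a := by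
    intro x hx
    have : A x - A a = 0 := by
      rw [hA, hA, intervalIntegral.integral_interval_sub_left (hbi _ _) (hbi _ _)]
      apply intervalIntegral.integral_zero_ae
      refine Eventually.of_forall fun y hy => ?_
      rw [Set.uIoc_of_le hx] at hy
      exact hb0 y fun h => absurd h.2 (not_le.2 hy.1)
    linarith
  have hL : ∀ x, x ≤ -a → A x = A (-a) := by
    intro x hx
    have : A (-a) - A x = 0 := by
      rw [hA, hA, intervalIntegral.integral_interval_sub_left (hbi _ _) (hbi _ _)]
      apply intervalIntegral.integral_zero_ae
      have hne : ∀ᵐ y : ℝ, y ≠ -a := by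
        simp [ae_iff]
      filter_upwards [hne] with y hy1 hy
      rw [Set.uIoc_of_le hx] at hy
      exact hb0 y fun h => hy1 (le_antisymm hy.2 h.1)
    linarith
  obtain ⟨C, hC⟩ : ∃ C, ∀ x, |A x| ≤ C := by
    obtain ⟨C, hC⟩ := (isCompact_Icc (a := -a) (b := a)).exists_bound_of_continuousOn
      hAc.continuousOn
    refine ⟨C, fun x => ?_⟩
    rcases le_total x (-a) with h | h
    · rw [hL x h]; exact hC _ ⟨le_rfl, by linarith⟩
    rcases le_total a x with h' | h'
    · rw [hR x h']; exact hC _ ⟨by linarith, le_rfl⟩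
    · exact hC x ⟨h, h'⟩
  obtain ⟨h, hh⟩ : ∃ h, h = (A (-a) - A a) / B := ⟨_, rfl⟩
  have hpos : 0 < h := by rw [hh]; exact div_pos (by linarith) hB
  have hBh : B * h = A (-a) - A a := by rw [hh]; field_simp
  obtain ⟨K, hK⟩ := (isCompact_Icc (a := -a) (b := a + h)).exists_bound_of_continuousOn
      (f := fun x => p₀ + B * x + A x) (by fun_prop)
  have key : ∀ E : ℝ, 0 ≤ E → h * Real.sqrt E + (-(K * h) - K * (2 * a)) ≤ ∫ x : ℝ,
          (Real.sqrt (max (E - (p₀ + B * x + A x) ^ 2) 0) -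
            Real.sqrt (max (E - (p₀ + B * x + A (-a)) ^ 2) 0)) := by
    intro E hE
    have iF := phase_integrable B p₀ hB A hAc C hC E
    have iG := phase_integrable B p₀ hB (fun _ => A (-a)) continuous_const _ (fun _ => le_rfl) E
    have ig := phase_integrable B p₀ hB (fun _ => A a) continuous_const _ (fun _ => le_rfl) E
    rw [integral_sub iF iG]
    obtain ⟨F, hF⟩ : ∃ F : ℝ → ℝ,
      F = fun x => Real.sqrt (max (E - (p₀ + B * x + A x) ^ 2) 0) := ⟨_, rfl⟩
    obtain ⟨G, hG⟩ : ∃ G : ℝ → ℝ,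
      G = fun x => Real.sqrt (max (E - (p₀ + B * x + A (-a)) ^ 2) 0) := ⟨_, rfl⟩
    obtain ⟨g, hg⟩ : ∃ g : ℝ → ℝ,
      g = fun x => Real.sqrt (max (E - (p₀ + B * x + A a) ^ 2) 0) := ⟨_, rfl⟩
    rw [← hF] at iF ⊢
    rw [← hG] at iG ⊢
    rw [← hg] at ig
    have split : ∀ f : ℝ → ℝ, Integrable f → ∫ x, f x =
        (∫ x in Set.Iic (-a), f x) + (∫ x in (-a)..a, f x) + ∫ x in Set.Ioi a, f x := by
      intro f hf
      rw [← intervalIntegral.integral_Iic_add_Ioi (b := a) hf.integrableOn hf.integrableOn,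
        ← intervalIntegral.integral_Iic_sub_Iic (a := -a) (b := a) hf.integrableOn hf.integrableOn]
      ring
    rw [split F iF, split G iG]
    have e1 : ∫ x in Set.Iic (-a), F x = ∫ x in Set.Iic (-a), G x := by
      apply setIntegral_congr_fun measurableSet_Iic
      intro x hx
      simp only [hF, hG, hL x hx]
    have e2 : ∫ x in Set.Ioi a, F x = ∫ x in Set.Ioi a, g x := by
      apply setIntegral_congr_fun measurableSet_Ioi
      intro x hx
      simp only [hF, hg, hR x (le_of_lt hx)]
    have e3 : ∫ x in Set.Ioi a, G x = ∫ x in Set.Ioi (a + h), g x := by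
      rw [← (measurePreserving_add_right volume h).setIntegral_preimage_emb
        (measurableEmbedding_addRight h) g (Set.Ioi (a + h)),
        show (fun x => x + h) ⁻¹' Set.Ioi (a + h) = Set.Ioi a by ext x; simp]
      apply setIntegral_congr_fun measurableSet_Ioi
      intro x hx
      simp only [hG, hg]
      rw [show p₀ + B * (x + h) + A a = p₀ + B * x + A (-a) by linarith]
    have e4 : (∫ x in Set.Ioi a, g x) - ∫ x in Set.Ioi (a + h), g x = ∫ x in a..(a + h), g x := by
      rw [intervalIntegral.integral_Ioi_sub_Ioi ig.integrableOn (by linarith),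
        intervalIntegral.integral_of_le (by linarith)]
    have e5 : (Real.sqrt E - K) * h ≤ ∫ x in a..(a + h), g x := by
      have := intervalIntegral.integral_mono_on (a := a) (b := a + h) (by linarith)
        (intervalIntegrable_const (c := Real.sqrt E - K) (μ := volume))
        ig.intervalIntegrable (fun x hx => by
          have h1 := hK x ⟨by linarith [hx.1], hx.2⟩
          rw [Real.norm_eq_abs, hR x hx.1] at h1
          have h2 := phase_lower E (p₀ + B * x + A a)
          simp only [hg]
          linarith)
      rw [intervalIntegral.integral_const, smul_eq_mul] at this
      linarith
    have e6 : (-K) * (2 * a) ≤ ∫ x in (-a)..a, (F x - G x) := by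
      have := intervalIntegral.integral_mono_on (a := -a) (b := a) (by linarith)
        (intervalIntegrable_const (c := -K) (μ := volume))
        (iF.sub iG).intervalIntegrable (fun x hx => by
          have h1 := hK x ⟨hx.1, by linarith [hx.2]⟩
          rw [Real.norm_eq_abs] at h1
          have h2 := phase_lower E (p₀ + B * x + A x)
          have h3 := phase_upper E (p₀ + B * x + A (-a)) hE
          simp only [hF, hG, Pi.sub_apply]
          linarith)
      rw [intervalIntegral.integral_const, smul_eq_mul] at this
      simp only [Pi.sub_apply] at this
      linarith
    rw [intervalIntegral.integral_sub iF.intervalIntegrable iG.intervalIntegrable] at e6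
    rw [e1, e2, e3]
    linarith
  refine tendsto_atTop_mono' atTop ((eventually_ge_atTop 0).mono key) ?_
  exact tendsto_atTop_add_const_right _ _ (Real.tendsto_sqrt_atTop.const_mul_atTop hpos)
end

section
/- Let B > 0, L > 0, and let h : ℝ → ℝ be continuous with h(y) < 0 for all y ∈ (0, L). Then ∫₀^L [ √(max((2√E − By + h(y))·(By − h(y)), 0)) − √(max((2√E − By)·By, 0)) ] dy → +∞ as E → +∞. -/
open Filter

lemma pointwise_aux (M S v k : ℝ) (hM : 1 ≤ M) (hS : 2 * M ≤ S) (hv : 0 ≤ v) (hk : k < 0)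
    (hu : v - k ≤ M) :
    Real.sqrt S * ((4 * M)⁻¹ * (-k)) ≤
      Real.sqrt (max ((2 * S - v + k) * (v - k)) 0) - Real.sqrt (max ((2 * S - v) * v) 0) := by
  have hP : 0 ≤ (2 * S - v + k) * (v - k) := mul_nonneg (by linarith) (by linarith)
  have hQ : 0 ≤ (2 * S - v) * v := mul_nonneg (by linarith) (by linarith)
  rw [max_eq_left hP, max_eq_left hQ]
  have hS0 : 0 < S := by linarith
  have hs : 0 < Real.sqrt S := Real.sqrt_pos.2 hS0
  have hs2 := Real.sq_sqrt hS0.le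
  have hp2 := Real.sq_sqrt hP
  have hq2 := Real.sq_sqrt hQ
  have hp0 := Real.sqrt_nonneg ((2 * S - v + k) * (v - k))
  have hq0 := Real.sqrt_nonneg ((2 * S - v) * v)
  have hMS : M * S ≤ M * M * S := by nlinarith [mul_nonneg (by linarith : 0 ≤ M - 1) (mul_pos (by linarith : 0 < M) hS0).le]
  have hbd : ∀ t, 0 ≤ t → t ≤ M → (2 * S - t) * t ≤ (2 * M * Real.sqrt S) ^ 2 := by
    intro t ht0 ht
    rw [mul_pow, hs2]
    nlinarith [mul_nonneg hS0.le (by linarith : 0 ≤ M - t), mul_pos (by linarith : 0 < M) hS0]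
  have hMs : 0 ≤ 2 * M * Real.sqrt S := by positivity
  have hp : Real.sqrt ((2 * S - v + k) * (v - k)) ≤ 2 * M * Real.sqrt S := by
    refine Real.sqrt_le_iff.2 ⟨hMs, ?_⟩
    have := hbd (v - k) (by linarith) hu
    convert this using 2; ring
  have hq : Real.sqrt ((2 * S - v) * v) ≤ 2 * M * Real.sqrt S :=
    Real.sqrt_le_iff.2 ⟨hMs, hbd v hv (by linarith)⟩
  generalize Real.sqrt ((2 * S - v + k) * (v - k)) = p at *
  generalize Real.sqrt ((2 * S - v) * v) = q at *
  generalize Real.sqrt S = s at *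
  have hdiff : (-k) * s ^ 2 ≤ p ^ 2 - q ^ 2 := by
    rw [hp2, hq2, hs2]
    nlinarith [mul_nonneg (by linarith : 0 ≤ -k) (by linarith : 0 ≤ S - v - (v - k))]
  have hpq : q ≤ p := by
    refine abs_le_of_sq_le_sq' ?_ hp0 |>.2
    nlinarith [mul_nonneg (by linarith : 0 ≤ -k) (sq_nonneg s)]
  have h1 : (p - q) * (p + q) ≤ (p - q) * (4 * M * s) :=
    mul_le_mul_of_nonneg_left (by linarith) (by linarith)
  have h2 : (-k) * s ≤ (p - q) * (4 * M) := by
    refine le_of_mul_le_mul_right ?_ hs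
    nlinarith
  have h4 : (0:ℝ) < 4 * M := by linarith
  calc s * ((4 * M)⁻¹ * (-k)) = (-k) * s / (4 * M) := by field_simp
    _ ≤ p - q := (div_le_iff₀ h4).2 h2

/-- Zero-mean example of Section 3.2: divergence of the phase-integral
difference for continuous h < 0 on (0, L). -/
theorem stmt_15 (B L : ℝ) (hB : 0 < B) (hL : 0 < L)
    (h : ℝ → ℝ) (hcont : Continuous h) (hneg : ∀ y ∈ Set.Ioo 0 L, h y < 0) :
    Tendsto (fun E : ℝ =>
        ∫ y in (0 : ℝ)..L,
          (Real.sqrt (max ((2 * Real.sqrt E - B * y + h y) * (B * y - h y)) 0) -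
            Real.sqrt (max ((2 * Real.sqrt E - B * y) * (B * y)) 0)))
      atTop atTop := by
  obtain ⟨M₀, hM₀⟩ := (isCompact_Icc (a := (0:ℝ)) (b := L)).exists_bound_of_continuousOn
    (f := fun y => B * y - h y) (by fun_prop)
  obtain ⟨M, hM1, hM⟩ : ∃ M : ℝ, 1 ≤ M ∧ M₀ ≤ M := ⟨max 1 M₀, le_max_left _ _, le_max_right _ _⟩
  have hI : 0 < ∫ y in (0:ℝ)..L, (4 * M)⁻¹ * (-(h y)) := by
    refine intervalIntegral.intervalIntegral_pos_of_pos_on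
      (Continuous.intervalIntegrable (by fun_prop) _ _) ?_ hL
    intro y hy
    have := hneg y hy
    have h4 : 0 < 4 * M := by linarith
    exact mul_pos (inv_pos.2 h4) (by linarith)
  have ht : Tendsto (fun E : ℝ => Real.sqrt (Real.sqrt E) *
      ∫ y in (0:ℝ)..L, (4 * M)⁻¹ * (-(h y))) atTop atTop :=
    (Real.tendsto_sqrt_atTop.comp Real.tendsto_sqrt_atTop).atTop_mul_const hI
  refine tendsto_atTop_mono' _ ?_ ht
  filter_upwards [Real.tendsto_sqrt_atTop.eventually_ge_atTop (2 * M)] with E hE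
  rw [← intervalIntegral.integral_const_mul]
  refine intervalIntegral.integral_mono_on_of_le_Ioo hL.le
    (Continuous.intervalIntegrable (by fun_prop) _ _)
    (Continuous.intervalIntegrable (by fun_prop) _ _) ?_
  intro y hy
  refine pointwise_aux M _ (B * y) (h y) hM1 hE (mul_nonneg hB.le hy.1.le) (hneg y hy) ?_
  exact (le_abs_self _).trans ((hM₀ y ⟨hy.1.le, hy.2.le⟩).trans hM)
end

section
/- Let B > 0, a > 0, p, ε ∈ ℝ, and define W : ℝ → ℝ by W(x) = B(x − a) for x > a, W(x) = 0 for −a ≤ x ≤ a, and W(x) = B(x + a) for x < −a. Let ψ : ℝ → ℝ be continuously differentiable and twice differentiable on ℝ ∖ {−a, a} with ψ''(x) = ((p + W(x))² − ε)ψ(x) for all x ∉ {−a, a}. Assume that x ↦ (p + W(x))ψ(x)² is Lebesgue integrable on ℝ and that ψ'(x)² − ((p + W(x))² − ε)ψ(x)² → 0 as x → ±∞. Then ∫_ℝ (p + W(x))ψ(x)² dx = p·∫_{−a}^{a} ψ(x)² dx. -/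
open MeasureTheory Filter

/-- Ideal screened-strip model: the Feynman–Hellmann integral equals
p·∫₋ₐᵃ ψ², so the band functions have their only stationary point at p = 0. -/
theorem stmt_17 (B a p ε : ℝ) (hB : 0 < B) (ha : 0 < a)
    (W : ℝ → ℝ)
    (hW_right : ∀ x : ℝ, a < x → W x = B * (x - a))
    (hW_mid : ∀ x ∈ Set.Icc (-a) a, W x = 0)
    (hW_left : ∀ x : ℝ, x < -a → W x = B * (x + a))
    (ψ : ℝ → ℝ) (hψ : ContDiff ℝ 1 ψ)
    (hψ'' : ∀ x : ℝ, x ≠ -a → x ≠ a → DifferentiableAt ℝ (deriv ψ) x)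
    (hode : ∀ x : ℝ, x ≠ -a → x ≠ a →
      deriv (deriv ψ) x = ((p + W x) ^ 2 - ε) * ψ x)
    (hint : Integrable (fun x : ℝ => (p + W x) * ψ x ^ 2) volume)
    (htop : Tendsto (fun x : ℝ =>
        (deriv ψ x) ^ 2 - ((p + W x) ^ 2 - ε) * ψ x ^ 2) atTop (nhds 0))
    (hbot : Tendsto (fun x : ℝ =>
        (deriv ψ x) ^ 2 - ((p + W x) ^ 2 - ε) * ψ x ^ 2) atBot (nhds 0)) :
    ∫ x : ℝ, (p + W x) * ψ x ^ 2 = p * ∫ x in (-a)..a, ψ x ^ 2 := by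
  have hWeq : W = fun x => B * (max (x - a) 0 + min (x + a) 0) := by
    funext x
    rcases lt_or_ge a x with h | h
    · rw [hW_right x h, max_eq_left (by linarith), min_eq_right (by linarith)]; ring
    · rcases lt_or_ge x (-a) with h' | h'
      · rw [hW_left x h', max_eq_right (by linarith), min_eq_left (by linarith)]; ring
      · rw [hW_mid x ⟨h', h⟩, max_eq_right (by linarith), min_eq_right (by linarith)]; ring
  have hWc : Continuous W := by rw [hWeq]; fun_prop
  have hψc : Continuous ψ := hψ.continuous
  have hdc : Continuous (deriv ψ) := hψ.continuous_deriv le_rfl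
  set F : ℝ → ℝ := fun x => (deriv ψ x) ^ 2 - ((p + W x) ^ 2 - ε) * ψ x ^ 2 with hF
  have hFc : Continuous F := by rw [hF]; fun_prop
  have key : ∀ x c : ℝ, x ≠ -a → x ≠ a → HasDerivAt W c x →
      HasDerivAt F (-2 * c * ((p + W x) * ψ x ^ 2)) x := by
    intro x c h1 h2 hw
    have d1 := (hψ.differentiable one_ne_zero x).hasDerivAt
    have d2 := (hψ'' x h1 h2).hasDerivAt
    rw [hode x h1 h2] at d2
    have := (d2.pow 2).sub ((((hw.const_add p).pow 2).sub_const ε).mul (d1.pow 2))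
    refine this.congr_deriv ?_
    simp
    ring
  have kR : ∫ x in Set.Ioi a, -2 * B * ((p + W x) * ψ x ^ 2) = 0 - F a := by
    refine integral_Ioi_of_hasDerivAt_of_tendsto hFc.continuousWithinAt ?_
      (hint.const_mul _).integrableOn htop
    intro x hx
    have hx : a < x := hx
    refine key x B (by linarith) hx.ne' ?_
    have : HasDerivAt (fun y => B * (y - a)) B x := by
      simpa using ((hasDerivAt_id x).sub_const a).const_mul B
    refine this.congr_of_eventuallyEq ?_
    filter_upwards [lt_mem_nhds hx] with y hy using hW_right y hy
  have kL : ∫ x in Set.Iic (-a), -2 * B * ((p + W x) * ψ x ^ 2) = F (-a) - 0 := by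
    refine integral_Iic_of_hasDerivAt_of_tendsto hFc.continuousWithinAt ?_
      (hint.const_mul _).integrableOn hbot
    intro x hx
    have hx : x < -a := hx
    refine key x B hx.ne (by linarith) ?_
    have : HasDerivAt (fun y => B * (y + a)) B x := by
      simpa using ((hasDerivAt_id x).add_const a).const_mul B
    refine this.congr_of_eventuallyEq ?_
    filter_upwards [gt_mem_nhds hx] with y hy using hW_left y hy
  have kM : ∫ x in (-a)..a, (0 : ℝ) = F a - F (-a) := by
    refine intervalIntegral.integral_eq_sub_of_hasDerivAt_of_le (by linarith)
      hFc.continuousOn ?_ (by simp)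
    intro x hx
    have h := key x 0 hx.1.ne' hx.2.ne ?_
    · simpa using h
    · refine (hasDerivAt_const x (0 : ℝ)).congr_of_eventuallyEq ?_
      filter_upwards [Ioo_mem_nhds hx.1 hx.2] with y hy using hW_mid y ⟨hy.1.le, hy.2.le⟩
  rw [integral_const_mul] at kR kL
  simp only [intervalIntegral.integral_zero] at kM
  have hs : ∫ x in (-a)..a, (p + W x) * ψ x ^ 2 = p * ∫ x in (-a)..a, ψ x ^ 2 := by
    rw [← intervalIntegral.integral_const_mul]
    refine intervalIntegral.integral_congr fun x hx => ?_
    rw [Set.uIcc_of_le (by linarith)] at hx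
    simp [hW_mid x hx]
  have e1 := intervalIntegral.integral_Iic_add_Ioi (b := a) hint.integrableOn hint.integrableOn
  have e2 := intervalIntegral.integral_Iic_sub_Iic (a := -a) (b := a)
    hint.integrableOn hint.integrableOn
  have e3 : (∫ x in Set.Iic (-a), (p + W x) * ψ x ^ 2)
      + ∫ x in Set.Ioi a, (p + W x) * ψ x ^ 2 = 0 := by
    have : B * ((∫ x in Set.Iic (-a), (p + W x) * ψ x ^ 2)
      + ∫ x in Set.Ioi a, (p + W x) * ψ x ^ 2) = 0 := by linarith
    exact (mul_eq_zero.1 this).resolve_left hB.ne'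
  linarith
end

section
/- Let T > 0. There exist constants C > 0 and E₀ > 0 such that for all E ≥ E₀ and all v ∈ [0, T]: | √((2√E − v)·v) − (4E)^{1/4}·√v | ≤ C·E^{−1/4}. -/
/-- Uniform asymptotic expansion of the phase-integral integrand: for v in a
fixed bounded interval [0, T], √((2√E − v)v) = (4E)^{1/4}√v + O(E^{−1/4})
uniformly, as E → ∞. -/
theorem stmt_19 (T : ℝ) (hT : 0 < T) :
    ∃ C E₀ : ℝ, 0 < C ∧ 0 < E₀ ∧
      ∀ E : ℝ, E₀ ≤ E →
        ∀ v ∈ Set.Icc (0 : ℝ) T,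
          |Real.sqrt ((2 * Real.sqrt E - v) * v) -
              (4 * E) ^ ((1 : ℝ) / 4) * Real.sqrt v| ≤
            C * E ^ (-(1 : ℝ) / 4) := by
  refine ⟨T * Real.sqrt T, T ^ 2, by positivity, by positivity, ?_⟩
  rintro E hE v ⟨hv0, hvT⟩
  have hE0 : 0 < E := lt_of_lt_of_le (by positivity) hE
  obtain ⟨p, hp⟩ : ∃ p, p = E ^ (-(1 : ℝ) / 4) := ⟨_, rfl⟩
  obtain ⟨s, hs⟩ : ∃ s, s = (4 * E) ^ ((1 : ℝ) / 4) := ⟨_, rfl⟩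
  obtain ⟨w, hw⟩ : ∃ w, w = Real.sqrt v := ⟨_, rfl⟩
  obtain ⟨r, hr⟩ : ∃ r, r = Real.sqrt E := ⟨_, rfl⟩
  have hp0 : 0 < p := hp ▸ Real.rpow_pos_of_pos hE0 _
  have hs0 : 0 < s := hs ▸ Real.rpow_pos_of_pos (by positivity) _
  have hw0 : 0 ≤ w := hw ▸ Real.sqrt_nonneg _
  have hw2 : w ^ 2 = v := hw ▸ Real.sq_sqrt hv0
  have hTr : T ≤ r := hr ▸ Real.le_sqrt_of_sq_le hE
  have hs2 : s ^ 2 = 2 * r := by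
    rw [hs, hr, ← Real.rpow_natCast, ← Real.rpow_mul (by positivity)]
    norm_num
    rw [← Real.sqrt_eq_rpow, Real.sqrt_mul (by norm_num)]
    congr 1
    rw [show (4 : ℝ) = 2 ^ 2 by norm_num]
    exact Real.sqrt_sq (by norm_num)
  have hp2 : p ^ 2 * r = 1 := by
    rw [hp, hr, ← Real.rpow_natCast, ← Real.rpow_mul hE0.le, Real.sqrt_eq_rpow,
      ← Real.rpow_add hE0]
    norm_num
  have hsp : 1 ≤ s * p := by
    have h : (s * p) ^ 2 = 2 := by rw [mul_pow, hs2]; linarith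
    nlinarith [mul_pos hs0 hp0]
  have hwp : w ^ 2 * p ^ 2 ≤ 1 := by
    rw [hw2]; nlinarith [sq_nonneg p]
  have hwT : w ≤ Real.sqrt T := hw ▸ Real.sqrt_le_sqrt hvT
  rw [← hp, ← hs, ← hr, ← hw]
  have h1 : Real.sqrt ((2 * r - v) * v) ≤ s * w := by
    apply Real.sqrt_le_iff.mpr
    refine ⟨by positivity, ?_⟩
    rw [mul_pow, hs2, hw2]; nlinarith
  have h2 : s * w - w ^ 3 * p ≤ Real.sqrt ((2 * r - v) * v) := by
    apply Real.le_sqrt_of_sq_le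
    rw [← hs2, ← hw2]
    have : 0 ≤ w ^ 4 * ((2 * (s * p) - 1) - w ^ 2 * p ^ 2) :=
      mul_nonneg (by positivity) (by linarith)
    nlinarith
  have h3 : w ^ 3 * p ≤ T * Real.sqrt T * p := by
    apply mul_le_mul_of_nonneg_right _ hp0.le
    calc w ^ 3 = v * w := by rw [← hw2]; ring
      _ ≤ _ := mul_le_mul hvT hwT hw0 hT.le
  rw [abs_le]
  constructor
  · linarith
  · have : 0 ≤ T * Real.sqrt T * p := by positivity
    linarith
end
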